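/- If there exists an s-extremal singly even self-dual [n, n/2, 10] code, then 46 ≤ n ≤ 70; and if there exists an s-extremal singly even self-dual [n, n/2, 14] code, then 70 ≤ n ≤ 94. -/

import Mathlib

open Finset

/-- Hamming weight of a binary vector. -/
def wt {n : ℕ} (x : Fin n → ZMod 2) : ℕ := hammingNorm x

/-- The dual of a set of binary vectors with respect to the standard inner product. -/
def dualSet {n : ℕ} (C : Set (Fin n → ZMod 2)) : Set (Fin n → ZMod 2) :=
  {x | ∀ y ∈ C, ∑ i, x i * y i = 0}

/-- A binary linear code is self-dual if it equals its dual code. -/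
def IsSelfDual {n : ℕ} (C : Submodule (ZMod 2) (Fin n → ZMod 2)) : Prop :=
  (C : Set (Fin n → ZMod 2)) = dualSet (C : Set (Fin n → ZMod 2))

/-- A self-dual code is singly even if some codeword has weight not divisible by 4. -/
def IsSinglyEvenSelfDual {n : ℕ} (C : Submodule (ZMod 2) (Fin n → ZMod 2)) : Prop :=
  IsSelfDual C ∧ ∃ x ∈ C, ¬ (4 ∣ wt x)

/-- The doubly even subcode `C₀` of `C` (as a set): codewords of weight ≡ 0 (mod 4). -/
def evenSub {n : ℕ} (C : Submodule (ZMod 2) (Fin n → ZMod 2)) : Set (Fin n → ZMod 2) :=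
  {x | x ∈ C ∧ 4 ∣ wt x}

/-- The shadow `S = C₀^⊥ \ C` of a singly even self-dual code. -/
def shadow {n : ℕ} (C : Submodule (ZMod 2) (Fin n → ZMod 2)) : Set (Fin n → ZMod 2) :=
  dualSet (evenSub C) \ (C : Set (Fin n → ZMod 2))

/-- The minimum (nonzero) weight of a set of vectors. -/
noncomputable def minWtSet {n : ℕ} (S : Set (Fin n → ZMod 2)) : ℕ :=
  sInf {w | ∃ x ∈ S, x ≠ 0 ∧ wt x = w}

/-- The minimum weight of a code. -/
noncomputable def minWt {n : ℕ} (C : Submodule (ZMod 2) (Fin n → ZMod 2)) : ℕ :=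
  minWtSet (C : Set (Fin n → ZMod 2))

/-- A singly even self-dual code of length `n` is s-extremal if
`d(S) = n/2 + 4 - 2 d(C)`. -/
def IsSExtremal {n : ℕ} (C : Submodule (ZMod 2) (Fin n → ZMod 2)) : Prop :=
  IsSinglyEvenSelfDual C ∧
    (minWtSet (shadow C) : ℤ) = ((n / 2 : ℕ) : ℤ) + 4 - 2 * (minWt C : ℤ)

/-- Two codes are equivalent if one is obtained from the other by permuting coordinates. -/
def CodeEquiv {n : ℕ} (C D : Submodule (ZMod 2) (Fin n → ZMod 2)) : Prop :=
  ∃ σ : Equiv.Perm (Fin n),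
    Submodule.map (LinearMap.funLeft (ZMod 2) (ZMod 2) σ) C = D

/-- The neighbor `C₀ ∪ (t + C₀)` of `C` obtained from a shadow vector `t`:
the span of the doubly even subcode together with `t`. -/
def neighborCode {n : ℕ} (C : Submodule (ZMod 2) (Fin n → ZMod 2))
    (t : Fin n → ZMod 2) : Submodule (ZMod 2) (Fin n → ZMod 2) :=
  Submodule.span (ZMod 2) (evenSub C ∪ {t})

/-!
Fix a shadow vector `u` of a self-dual code `C`, and let `K_k` denote the Krawtchouk polynomials. By
the MacWilliams identity the sum of `K_{2k}(wt (u + c))` over `c ∈ C` is `(-1) ^ k * |C| * A_{2k}`,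
where `A_w` is the number of codewords of weight `w`; in particular it vanishes for
`0 < 2k < d(C)`.

If `C` is s-extremal with `d(C) = 2(J + 1)`, then `y = (n - 2 wt (u + c)) ^ 2` only takes the
`J + 1` values `64 j ^ 2`, `j ≤ J`. As functions of `y`, the `(2k)! K_{2k}` are monic orthogonal
polynomials of degree `k`, and their sums for `k ≤ J` are known, so the distribution of `y` is
forced, and with it every `A_{2k}`. As `d(S) ≥ 0`, the length is at least `8J`; for each other
length to be excluded, some of these forced numbers is negative.
-/

open Polynomial

section ThreeTerm

variable {R : Type*} [CommRing R] (α β : ℕ → R)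

/-- The value at `y` of the `k`-th monic orthogonal polynomial `P_k`, given by the three-term
recurrence `P_{k+2} = (y - α_{k+1}) P_{k+1} - β_k P_k`. -/
def threeTermPoly (y : R) : ℕ → R
  | 0 => 1
  | 1 => y - α 0
  | k + 2 => (y - α (k + 1)) * threeTermPoly y (k + 1) - β k * threeTermPoly y k

/-- The mean of `∏ a ∈ l, (y - a) * P_k y` for the linear functional making the `P_k` of
`threeTermPoly` orthogonal, that is, with mean `1` of `P_0` and mean `0` of all other `P_k`. -/
def threeTermMean : List R → ℕ → R
  | [], 0 => 1
  | [], _ + 1 => 0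
  | a :: l, 0 => threeTermMean l 1 + (α 0 - a) * threeTermMean l 0
  | a :: l, k + 1 =>
    threeTermMean l (k + 2) + (α (k + 1) - a) * threeTermMean l (k + 1) + β k * threeTermMean l k

variable {α β}

theorem sum_prod_mul_threeTermPoly {ι : Type*} [Fintype ι] {x : ι → R} {D : ℕ}
    (hx : ∀ k, 0 < k → k < D → ∑ i, threeTermPoly α β (x i) k = 0) (l : List R) (k : ℕ)
    (hk : l.length + k < D) :
    ∑ i, (l.map (x i - ·)).prod * threeTermPoly α β (x i) k =
      Fintype.card ι * threeTermMean α β l k := by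
  induction l generalizing k with
  | nil =>
    rcases k with _ | k
    · simp [threeTermPoly, threeTermMean]
    · simpa [threeTermMean] using hx (k + 1) k.succ_pos (by simpa using hk)
  | cons a l ih =>
    rw [List.length_cons] at hk
    rcases k with _ | k
    · rw [threeTermMean, mul_add, mul_left_comm, ← ih 1 (by omega), ← ih 0 (by omega),
        Finset.mul_sum, ← Finset.sum_add_distrib]
      refine Finset.sum_congr rfl fun i _ => ?_
      simp only [List.map_cons, List.prod_cons, threeTermPoly]
      ring
    · rw [threeTermMean, mul_add, mul_add, mul_left_comm, mul_left_comm _ (β k),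
        ← ih (k + 2) (by omega), ← ih (k + 1) (by omega), ← ih k (by omega),
        Finset.mul_sum, Finset.mul_sum, ← Finset.sum_add_distrib, ← Finset.sum_add_distrib]
      refine Finset.sum_congr rfl fun i _ => ?_
      simp only [List.map_cons, List.prod_cons, threeTermPoly]
      ring

end ThreeTerm

section Quadrature

variable {K : Type*} [Field K] [DecidableEq K]

/-- The weight at the node `a` of the interpolatory quadrature rule with nodes `l` for the
functional of `threeTermMean`. -/
def nodeWeight (α β : ℕ → K) (l : List K) (a : K) : K :=
  threeTermMean α β (l.erase a) 0 / ((l.erase a).map (a - ·)).prod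

variable {α β : ℕ → K} {l : List K} {ι : Type*} [Fintype ι] {x : ι → K}

theorem card_filter_eq_card_mul_nodeWeight (hl : l.Nodup) (hxl : ∀ i, x i ∈ l)
    (hx : ∀ k, 0 < k → k < l.length → ∑ i, threeTermPoly α β (x i) k = 0) {a : K} (ha : a ∈ l) :
    (#{i | x i = a} : K) = Fintype.card ι * nodeWeight α β l a := by
  have hne : ((l.erase a).map (a - ·)).prod ≠ 0 := by
    simp only [ne_eq, List.prod_eq_zero_iff, List.mem_map, sub_eq_zero, not_exists, not_and]
    rintro b hb rfl
    exact hl.not_mem_erase hb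
  have hother : ∀ i, x i ≠ a → ((l.erase a).map (x i - ·)).prod = 0 := fun i hi =>
    List.prod_eq_zero_iff.2 <| List.mem_map.2
      ⟨x i, (List.mem_erase_of_ne hi).2 (hxl i), sub_self _⟩
  have hlen : (l.erase a).length + 0 < l.length := by
    have := List.length_pos_of_mem ha
    rw [List.length_erase_of_mem ha]
    omega
  have hsum := sum_prod_mul_threeTermPoly hx (l.erase a) 0 hlen
  rw [nodeWeight, ← mul_div_assoc, eq_div_iff hne, ← hsum, Finset.card_filter, Nat.cast_sum,
    Finset.sum_mul]
  refine Finset.sum_congr rfl fun i _ => ?_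
  by_cases hi : x i = a
  · simp [hi, threeTermPoly]
  · simp [hi, hother i hi]

theorem sum_eq_card_mul_sum_nodeWeight (hl : l.Nodup) (hxl : ∀ i, x i ∈ l)
    (hx : ∀ k, 0 < k → k < l.length → ∑ i, threeTermPoly α β (x i) k = 0) (f : K → K) :
    ∑ i, f (x i) = Fintype.card ι * (l.map fun a => nodeWeight α β l a * f a).sum := by
  rw [← List.sum_toFinset _ hl, Finset.mul_sum,
    ← Finset.sum_fiberwise_of_maps_to (t := l.toFinset) (g := x)
      fun i _ => List.mem_toFinset.2 (hxl i)]
  refine Finset.sum_congr rfl fun a ha => ?_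
  rw [← mul_assoc, ← card_filter_eq_card_mul_nodeWeight hl hxl hx (List.mem_toFinset.1 ha),
    ← nsmul_eq_mul, ← Finset.sum_const]
  exact Finset.sum_congr rfl fun i hi => by rw [(Finset.mem_filter.1 hi).2]

end Quadrature

section Krawtchouk

theorem addChar_sum_eq_prod {A M ι : Type*} [AddCommMonoid A] [CommMonoid M] (ψ : AddChar A M)
    (s : Finset ι) (f : ι → A) : ψ (∑ i ∈ s, f i) = ∏ i ∈ s, ψ (f i) :=
  map_sum ψ.toAddMonoidHom f s

variable {n : ℕ}

/-- The nontrivial character of `ZMod 2`. -/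
def parityChar : AddChar (ZMod 2) ℚ := AddChar.zmodChar 2 (ζ := -1) (by norm_num)

theorem parityChar_one : parityChar 1 = -1 := by
  simp [parityChar, AddChar.zmodChar_apply, ZMod.val_one]

theorem parityChar_eq_one_sub (a : ZMod 2) : parityChar a = 1 - 2 * (a.val : ℚ) := by
  obtain rfl | rfl := (by decide : ∀ a : ZMod 2, a = 0 ∨ a = 1) a
  · simp
  · rw [parityChar_one, ZMod.val_one]
    norm_num

theorem parityChar_mul_self (a : ZMod 2) : parityChar a * parityChar a = 1 := by
  rw [← AddChar.map_add_eq_mul, CharTwo.add_self_eq_zero, AddChar.map_zero_eq_one]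

theorem wt_eq_sum_val (x : Fin n → ZMod 2) : wt x = ∑ i, (x i).val := by
  have hval : ∀ a : ZMod 2, (if a ≠ 0 then 1 else 0) = a.val := by decide
  simp only [wt, hammingNorm, Finset.card_filter, hval]

theorem sum_parityChar (z : Fin n → ZMod 2) : ∑ i, parityChar (z i) = n - 2 * wt z := by
  simp [parityChar_eq_one_sub, wt_eq_sum_val, Finset.mul_sum]

/-- The generating polynomial `(1 + X) ^ (n - wt z) * (1 - X) ^ wt z` of the values at `wt z` of the
Krawtchouk polynomials, written as a product over the coordinates. -/
noncomputable def krawtchoukGen (z : Fin n → ZMod 2) : ℚ[X] :=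
  ∏ i, (1 + C (parityChar (z i)) * X)

theorem krawtchoukGen_eq_sum (z : Fin n → ZMod 2) :
    krawtchoukGen z = ∑ y : Fin n → ZMod 2, C (parityChar (y ⬝ᵥ z)) * X ^ wt y := by
  have hfactor : ∀ i, (1 + C (parityChar (z i)) * X : ℚ[X]) =
      ∑ a : ZMod 2, C (parityChar (a * z i)) * X ^ a.val := fun i => by
    rw [show (Finset.univ : Finset (ZMod 2)) = {0, 1} from rfl, Finset.sum_pair zero_ne_one]
    simp [ZMod.val_one]
  simp only [krawtchoukGen, hfactor, Fintype.prod_sum, Finset.prod_mul_distrib, ← map_prod,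
    Finset.prod_pow_eq_pow_sum, ← wt_eq_sum_val]
  simp only [dotProduct, addChar_sum_eq_prod]

theorem coeff_krawtchoukGen (z : Fin n → ZMod 2) (k : ℕ) :
    (krawtchoukGen z).coeff k = ∑ y with wt y = k, parityChar (y ⬝ᵥ z) := by
  simp [krawtchoukGen_eq_sum, Finset.sum_filter, eq_comm]

theorem one_sub_X_sq_mul_derivative_krawtchoukGen (z : Fin n → ZMod 2) :
    (1 - X ^ 2) * derivative (krawtchoukGen z) =
      (C (n - 2 * wt z : ℚ) - C (n : ℚ) * X) * krawtchoukGen z := by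
  have hlin : (C (n - 2 * wt z : ℚ) - C (n : ℚ) * X : ℚ[X]) =
      ∑ i : Fin n, (C (parityChar (z i)) - X) := by
    simp [← sum_parityChar, Finset.sum_sub_distrib]
  rw [hlin, krawtchoukGen, derivative_prod_finset, Finset.mul_sum, Finset.sum_mul]
  refine Finset.sum_congr rfl fun i _ => ?_
  have hsq : (C (parityChar (z i)) * C (parityChar (z i)) : ℚ[X]) = 1 := by
    rw [← C_mul, parityChar_mul_self, C_1]
  rw [← Finset.mul_prod_erase _ _ (Finset.mem_univ i)]
  simp only [derivative_add, derivative_one, derivative_mul, derivative_C, derivative_X]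
  linear_combination
    (-(X * ∏ j ∈ Finset.univ.erase i, (1 + C (parityChar (z j)) * X))) * hsq

theorem coeff_zero_krawtchoukGen (z : Fin n → ZMod 2) : (krawtchoukGen z).coeff 0 = 1 := by
  simp [krawtchoukGen, coeff_zero_prod]

theorem coeff_one_krawtchoukGen (z : Fin n → ZMod 2) :
    (krawtchoukGen z).coeff 1 = n - 2 * wt z := by
  have h := congrArg (coeff · 0) (one_sub_X_sq_mul_derivative_krawtchoukGen z)
  simpa [mul_coeff_zero, coeff_derivative, coeff_zero_krawtchoukGen] using h

theorem coeff_add_two_krawtchoukGen (z : Fin n → ZMod 2) (k : ℕ) :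
    (k + 2) * (krawtchoukGen z).coeff (k + 2) =
      (n - 2 * wt z) * (krawtchoukGen z).coeff (k + 1) - (n - k) * (krawtchoukGen z).coeff k := by
  have h := congrArg (coeff · (k + 1)) (one_sub_X_sq_mul_derivative_krawtchoukGen z)
  simp only [sub_mul, one_mul, coeff_sub, mul_assoc, coeff_C_mul, coeff_X_mul,
    coeff_derivative] at h
  rcases k with _ | k
  · rw [sq, mul_assoc, coeff_X_mul, coeff_X_mul_zero] at h
    push_cast at h ⊢
    linarith
  · rw [add_assoc k 1 1, one_add_one_eq_two, coeff_X_pow_mul, coeff_derivative] at h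
    push_cast at h ⊢
    simp only [add_assoc, Nat.reduceAdd] at h ⊢
    linarith

theorem factorial_mul_coeff_add_two_krawtchoukGen (z : Fin n → ZMod 2) (k : ℕ) :
    (k + 2).factorial * (krawtchoukGen z).coeff (k + 2) =
      (n - 2 * wt z) * ((k + 1).factorial * (krawtchoukGen z).coeff (k + 1)) -
        (k + 1) * (n - k) * (k.factorial * (krawtchoukGen z).coeff k) := by
  simp only [Nat.factorial_succ, Nat.cast_mul]
  push_cast
  linear_combination (k + 1) * k.factorial * coeff_add_two_krawtchoukGen z k

/-- The coefficients `α` in the three-term recurrence of the monic Krawtchouk polynomials of even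
degree `2k`, as polynomials in `y = (n - 2w) ^ 2`. -/
def krawtchoukDiag (n : ℚ) (k : ℕ) : ℚ := (4 * k + 1) * n - 8 * k ^ 2

/-- The coefficients `β` in the recurrence of `krawtchoukDiag`. -/
def krawtchoukOffDiag (n : ℚ) (k : ℕ) : ℚ :=
  (2 * k + 1) * (2 * k + 2) * (n - 2 * k) * (n - 2 * k - 1)

theorem threeTermPoly_krawtchouk (z : Fin n → ZMod 2) (k : ℕ) :
    threeTermPoly (krawtchoukDiag n) (krawtchoukOffDiag n) ((n - 2 * wt z) ^ 2) k =
      (2 * k).factorial * (krawtchoukGen z).coeff (2 * k) := by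
  induction k using Nat.twoStepInduction with
  | zero => simp [threeTermPoly, coeff_zero_krawtchoukGen]
  | one =>
    have h := factorial_mul_coeff_add_two_krawtchoukGen z 0
    simp only [zero_add, coeff_zero_krawtchoukGen, coeff_one_krawtchoukGen] at h
    rw [threeTermPoly, krawtchoukDiag, mul_one, h]
    norm_num
    ring
  | more k ih ih' =>
    have h₀ := factorial_mul_coeff_add_two_krawtchoukGen z (2 * k)
    have h₁ := factorial_mul_coeff_add_two_krawtchoukGen z (2 * k + 1)
    have h₂ := factorial_mul_coeff_add_two_krawtchoukGen z (2 * k + 2)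
    rw [threeTermPoly, ih, ih', krawtchoukDiag, krawtchoukOffDiag]
    simp only [mul_add, Nat.reduceMul, add_assoc, Nat.reduceAdd] at h₀ h₁ h₂ ⊢
    push_cast at h₀ h₁ h₂ ⊢
    linear_combination
      -h₂ - (n - 2 * wt z) * h₁ - (2 * k + 2) * (n - 2 * k - 1) * h₀

end Krawtchouk

section SelfDual

theorem zmod_two_eq_one_of_ne_zero {a : ZMod 2} (ha : a ≠ 0) : a = 1 :=
  Fin.eq_one_of_ne_zero a ha

variable {n : ℕ} {C : Submodule (ZMod 2) (Fin n → ZMod 2)} {u v c c' : Fin n → ZMod 2}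

theorem wt_add (a b : Fin n → ZMod 2) :
    wt (a + b) + 2 * ∑ i, (a i).val * (b i).val = wt a + wt b := by
  have hval : ∀ a b : ZMod 2, (a + b).val + 2 * (a.val * b.val) = a.val + b.val := by decide
  simp only [wt_eq_sum_val, Finset.mul_sum, ← Finset.sum_add_distrib, Pi.add_apply, hval]

theorem wt_add_one_add_wt (a : Fin n → ZMod 2) : wt (a + 1) + wt a = n := by
  have hval : ∀ a : ZMod 2, (a + 1).val + a.val = 1 := by decide
  simp [wt_eq_sum_val, ← Finset.sum_add_distrib, hval]

theorem dotProduct_eq_natCast (a b : Fin n → ZMod 2) :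
    a ⬝ᵥ b = (∑ i, (a i).val * (b i).val : ℕ) := by
  simp [dotProduct]

theorem dotProduct_self_eq_wt (a : Fin n → ZMod 2) : a ⬝ᵥ a = wt a := by
  have hval : ∀ a : ZMod 2, a.val * a.val = a.val := by decide
  simp only [dotProduct_eq_natCast, hval, wt_eq_sum_val]

theorem dotProduct_one_eq_wt (a : Fin n → ZMod 2) : 1 ⬝ᵥ a = wt a := by
  simp [dotProduct_eq_natCast, ZMod.val_one, wt_eq_sum_val]

theorem minWtSet_le_wt {S : Set (Fin n → ZMod 2)} (hv : v ∈ S) (hv₀ : v ≠ 0) :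
    minWtSet S ≤ wt v :=
  Nat.sInf_le ⟨v, hv, hv₀, rfl⟩

theorem exists_wt_eq_minWtSet {S : Set (Fin n → ZMod 2)} (hv : v ∈ S) (hv₀ : v ≠ 0) :
    ∃ u ∈ S, wt u = minWtSet S := by
  obtain ⟨u, hu, -, hwt⟩ := Nat.sInf_mem (⟨wt v, v, hv, hv₀, rfl⟩ :
    {w | ∃ x ∈ S, x ≠ 0 ∧ wt x = w}.Nonempty)
  exact ⟨u, hu, hwt⟩

theorem ne_zero_of_mem_shadow (hv : v ∈ shadow C) : v ≠ 0 := by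
  rintro rfl
  exact hv.2 C.zero_mem

namespace IsSelfDual

theorem mem_iff (hC : IsSelfDual C) : v ∈ C ↔ ∀ c ∈ C, v ⬝ᵥ c = 0 :=
  Set.ext_iff.1 hC v

theorem dotProduct_eq_zero (hC : IsSelfDual C) (hc : c ∈ C) (hc' : c' ∈ C) : c ⬝ᵥ c' = 0 :=
  hC.mem_iff.1 hc c' hc'

theorem two_dvd_wt (hC : IsSelfDual C) (hc : c ∈ C) : 2 ∣ wt c := by
  rw [← ZMod.natCast_eq_zero_iff, ← dotProduct_self_eq_wt, hC.dotProduct_eq_zero hc hc]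

theorem one_mem (hC : IsSelfDual C) : 1 ∈ C :=
  hC.mem_iff.2 fun c hc => by
    rw [dotProduct_one_eq_wt, ZMod.natCast_eq_zero_iff]
    exact hC.two_dvd_wt hc

theorem two_dvd_length (hC : IsSelfDual C) : 2 ∣ n := by
  have hwt : wt (1 : Fin n → ZMod 2) = n := by simp [wt_eq_sum_val, ZMod.val_one]
  exact hwt ▸ hC.two_dvd_wt hC.one_mem

theorem wt_add_modEq (hC : IsSelfDual C) (hc : c ∈ C) (hc' : c' ∈ C) :
    wt (c + c') ≡ wt c + wt c' [MOD 4] := by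
  have hdot := hC.dotProduct_eq_zero hc hc'
  rw [dotProduct_eq_natCast, ZMod.natCast_eq_zero_iff] at hdot
  have hadd := wt_add c c'
  rw [Nat.ModEq]
  omega

theorem dotProduct_eq_zero_iff_of_mem_shadow (hC : IsSelfDual C) (hv : v ∈ shadow C) (hc : c ∈ C) :
    v ⬝ᵥ c = 0 ↔ 4 ∣ wt c := by
  refine ⟨fun hvc => ?_, fun h4 => hv.1 c ⟨hc, h4⟩⟩
  by_contra h4
  refine hv.2 (hC.mem_iff.2 fun y hy => ?_)
  by_cases hy4 : 4 ∣ wt y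
  · exact hv.1 y ⟨hy, hy4⟩
  · have hadd := hC.wt_add_modEq hc hy
    have hc2 := hC.two_dvd_wt hc
    have hy2 := hC.two_dvd_wt hy
    have hcy : v ⬝ᵥ (c + y) = 0 := hv.1 (c + y) ⟨C.add_mem hc hy, by rw [Nat.ModEq] at hadd; omega⟩
    rwa [dotProduct_add, hvc, zero_add] at hcy

theorem parityChar_dotProduct_of_mem_shadow (hC : IsSelfDual C) (hv : v ∈ shadow C) (hc : c ∈ C)
    {k : ℕ} (hk : wt c = 2 * k) : parityChar (c ⬝ᵥ v) = (-1) ^ k := by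
  have hiff := hC.dotProduct_eq_zero_iff_of_mem_shadow hv hc
  rw [hk, show 4 = 2 * 2 from rfl, Nat.mul_dvd_mul_iff_left two_pos, ← even_iff_two_dvd] at hiff
  rw [dotProduct_comm]
  obtain hk' | hk' := k.even_or_odd
  · rw [hiff.2 hk', AddChar.map_zero_eq_one, hk'.neg_one_pow]
  · have hdot : v ⬝ᵥ c ≠ 0 := fun h => Nat.not_even_iff_odd.2 hk' (hiff.1 h)
    rw [zmod_two_eq_one_of_ne_zero hdot, parityChar_one, hk'.neg_one_pow]

theorem add_mem_shadow (hC : IsSelfDual C) (hv : v ∈ shadow C) (hc : c ∈ C) :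
    v + c ∈ shadow C := by
  refine ⟨fun y hy => ?_, fun h => hv.2 ((C.add_mem_iff_left hc).1 h)⟩
  change (v + c) ⬝ᵥ y = 0
  rw [add_dotProduct, hC.dotProduct_eq_zero hc hy.1, add_zero]
  exact hv.1 y hy

theorem wt_add_modEq_of_mem_shadow (hC : IsSelfDual C) (hv : v ∈ shadow C) (hc : c ∈ C) :
    wt (v + c) ≡ wt v [MOD 4] := by
  have hdot := hC.dotProduct_eq_zero_iff_of_mem_shadow hv hc
  rw [dotProduct_eq_natCast, ZMod.natCast_eq_zero_iff] at hdot
  have hadd := wt_add v c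
  have hc2 := hC.two_dvd_wt hc
  rw [Nat.ModEq]
  by_cases h4 : 4 ∣ wt c
  · have := hdot.2 h4
    omega
  · have := mt hdot.1 h4
    omega

theorem add_mem_of_mem_shadow (hC : IsSelfDual C) (hu : u ∈ shadow C) (hv : v ∈ shadow C) :
    u + v ∈ C := by
  refine hC.mem_iff.2 fun c hc => ?_
  rw [add_dotProduct]
  by_cases h4 : 4 ∣ wt c
  · rw [(hC.dotProduct_eq_zero_iff_of_mem_shadow hu hc).2 h4,
      (hC.dotProduct_eq_zero_iff_of_mem_shadow hv hc).2 h4, add_zero]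
  · rw [zmod_two_eq_one_of_ne_zero (mt (hC.dotProduct_eq_zero_iff_of_mem_shadow hu hc).1 h4),
      zmod_two_eq_one_of_ne_zero (mt (hC.dotProduct_eq_zero_iff_of_mem_shadow hv hc).1 h4),
      ZModModule.add_self]

theorem wt_modEq_of_mem_shadow (hC : IsSelfDual C) (hu : u ∈ shadow C) (hv : v ∈ shadow C) :
    wt u ≡ wt v [MOD 4] := by
  have h := hC.wt_add_modEq_of_mem_shadow hu (hC.add_mem_of_mem_shadow hu hv)
  rw [← add_assoc, ZModModule.add_self, zero_add] at h
  exact h.symm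

/-- The linear functional `c ↦ wt c / 2` on a self-dual code, whose kernel is the doubly even
subcode. -/
def halfWt (hC : IsSelfDual C) : C →ₗ[ZMod 2] ZMod 2 :=
  AddMonoidHom.toZModLinearMap 2 <| AddMonoidHom.mk' (fun c => (wt c.1 / 2 : ℕ)) fun c c' => by
    rw [← Nat.cast_add, ZMod.natCast_eq_natCast_iff]
    have hadd := hC.wt_add_modEq c.2 c'.2
    have hc := hC.two_dvd_wt c.2
    have hc' := hC.two_dvd_wt c'.2
    rw [Nat.ModEq] at hadd ⊢
    rw [Submodule.coe_add]
    omega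

theorem halfWt_eq_zero_iff (hC : IsSelfDual C) (c : C) : hC.halfWt c = 0 ↔ 4 ∣ wt c.1 := by
  have hc := hC.two_dvd_wt c.2
  change ((wt c.1 / 2 : ℕ) : ZMod 2) = 0 ↔ _
  rw [ZMod.natCast_eq_zero_iff]
  omega

end IsSelfDual

theorem IsSinglyEvenSelfDual.shadow_nonempty (hC : IsSinglyEvenSelfDual C) :
    (shadow C).Nonempty := by
  obtain ⟨hC, x, hx, hx4⟩ := hC
  obtain ⟨φ, hφ⟩ := LinearMap.exists_extend hC.halfWt
  obtain ⟨v, rfl⟩ := (dotProductEquiv (ZMod 2) (Fin n)).surjective φ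
  have hv : ∀ c ∈ C, v ⬝ᵥ c = 0 ↔ 4 ∣ wt c := fun c hc => by
    rw [← hC.halfWt_eq_zero_iff ⟨c, hc⟩, ← hφ]
    rfl
  exact ⟨v, fun c hc => (hv c hc.1).2 hc.2,
    fun hvC => hx4 ((hv x hx).1 (hC.dotProduct_eq_zero hvC hx))⟩

section MacWilliams

variable [DecidablePred (· ∈ C)]

theorem IsSelfDual.sum_parityChar_dotProduct (hC : IsSelfDual C) (y : Fin n → ZMod 2) :
    ∑ c : C, parityChar (y ⬝ᵥ c) = if y ∈ C then (Fintype.card C : ℚ) else 0 := by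
  split_ifs with hy
  · simp [hC.dotProduct_eq_zero hy]
  · let ψ : AddChar C ℚ := parityChar.compAddMonoidHom
      ((dotProductEquiv (ZMod 2) (Fin n) y).domRestrict C).toAddMonoidHom
    have hψ : ψ ≠ 0 := fun hψ => hy <| hC.mem_iff.2 fun c hc => by
      by_contra hyc
      have hone : ψ ⟨c, hc⟩ = 1 := by rw [hψ, AddChar.zero_apply]
      have hneg : ψ ⟨c, hc⟩ = -1 :=
        (congrArg parityChar (zmod_two_eq_one_of_ne_zero hyc)).trans parityChar_one
      norm_num [hone] at hneg
    exact AddChar.sum_eq_zero_iff_ne_zero.2 hψ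

theorem IsSelfDual.sum_coeff_krawtchoukGen_shadow (hC : IsSelfDual C) (hv : v ∈ shadow C) (k : ℕ) :
    ∑ c : C, (krawtchoukGen (v + c.1)).coeff (2 * k) =
      Fintype.card C * ((-1) ^ k * #{y | y ∈ C ∧ wt y = 2 * k}) := by
  simp only [coeff_krawtchoukGen, dotProduct_add, AddChar.map_add_eq_mul]
  rw [Finset.sum_comm]
  simp only [← Finset.mul_sum, hC.sum_parityChar_dotProduct, mul_ite, mul_zero]
  rw [← Finset.sum_filter, Finset.filter_filter, Finset.filter_congr fun y _ => and_comm,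
    Finset.sum_congr rfl fun y hy => by
      rw [hC.parityChar_dotProduct_of_mem_shadow hv (Finset.mem_filter.1 hy).2.1
        (Finset.mem_filter.1 hy).2.2],
    Finset.sum_const, nsmul_eq_mul]
  ring

theorem IsSelfDual.sum_threeTermPoly_krawtchouk_shadow (hC : IsSelfDual C) (hv : v ∈ shadow C)
    (k : ℕ) :
    ∑ c : C, threeTermPoly (krawtchoukDiag n) (krawtchoukOffDiag n)
        ((n - 2 * wt (v + c.1)) ^ 2) k =
      Fintype.card C * ((2 * k).factorial * ((-1) ^ k * #{y | y ∈ C ∧ wt y = 2 * k})) := by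
  simp only [threeTermPoly_krawtchouk, ← Finset.mul_sum, hC.sum_coeff_krawtchoukGen_shadow hv]
  ring

end MacWilliams

end SelfDual

section SExtremal

/-- The values `64 j ^ 2`, `j ≤ J`, which `(n - 2 wt v) ^ 2` can take on the shadow of an s-extremal
code of minimum weight `2 (J + 1)`. -/
def shadowNodes (J : ℕ) : List ℚ := (List.range (J + 1)).map fun j : ℕ => 64 * (j : ℚ) ^ 2

theorem length_shadowNodes (J : ℕ) : (shadowNodes J).length = J + 1 := by
  simp [shadowNodes]

theorem nodup_shadowNodes (J : ℕ) : (shadowNodes J).Nodup := by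
  refine List.nodup_range.map fun i j hij => ?_
  have hsq : (i : ℚ) ^ 2 = (j : ℚ) ^ 2 := by linarith
  exact_mod_cast (pow_left_inj₀ (Nat.cast_nonneg i) (Nat.cast_nonneg j) two_ne_zero).1 hsq

/-- The proportion of vectors `v` with `(n - 2 wt v) ^ 2 = a` in a coset of an s-extremal code of
length `n` and minimum weight `2 (J + 1)` in its shadow, as forced by the MacWilliams identity. -/
def forcedShadowDensity (J : ℕ) (n a : ℚ) : ℚ :=
  nodeWeight (krawtchoukDiag n) (krawtchoukOffDiag n) (shadowNodes J) a

/-- `(2k)!` times the number of codewords of weight `2k` in an s-extremal code of length `n` and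
minimum weight `2 (J + 1)`, as forced by the MacWilliams identity. -/
def forcedWeightCount (J : ℕ) (n : ℚ) (k : ℕ) : ℚ :=
  (-1) ^ k * ((shadowNodes J).map fun a =>
    forcedShadowDensity J n a * threeTermPoly (krawtchoukDiag n) (krawtchoukOffDiag n) a k).sum

variable {n J : ℕ} {C : Submodule (ZMod 2) (Fin n → ZMod 2)} {v : Fin n → ZMod 2}

namespace IsSExtremal

theorem isSelfDual (hC : IsSExtremal C) : IsSelfDual C :=
  hC.1.1

theorem minWtSet_shadow (hC : IsSExtremal C) (hd : minWt C = 2 * (J + 1)) :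
    2 * minWtSet (shadow C) + 8 * J = n := by
  have heven := hC.isSelfDual.two_dvd_length
  have hs := hC.2
  rw [hd] at hs
  omega

theorem sq_mem_shadowNodes (hC : IsSExtremal C) (hd : minWt C = 2 * (J + 1)) (hv : v ∈ shadow C) :
    (n - 2 * wt v : ℚ) ^ 2 ∈ shadowNodes J := by
  obtain ⟨u, hu, hwu⟩ := exists_wt_eq_minWtSet hv (ne_zero_of_mem_shadow hv)
  have hs := hC.minWtSet_shadow hd
  have hlower := minWtSet_le_wt hv (ne_zero_of_mem_shadow hv)
  have hv₁ := hC.isSelfDual.add_mem_shadow hv hC.isSelfDual.one_mem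
  have hupper := minWtSet_le_wt hv₁ (ne_zero_of_mem_shadow hv₁)
  have hcompl := wt_add_one_add_wt v
  have hmod := hC.isSelfDual.wt_modEq_of_mem_shadow hu hv
  rw [Nat.ModEq] at hmod
  obtain ⟨j, hj⟩ : (8 : ℤ) ∣ n - 2 * wt v := by omega
  have hjJ : j.natAbs < J + 1 := by omega
  refine List.mem_map.2 ⟨j.natAbs, List.mem_range.2 hjJ, ?_⟩
  have hsq : (j.natAbs : ℚ) ^ 2 = (j : ℚ) ^ 2 := by rw [Nat.cast_natAbs, Int.cast_abs, sq_abs]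
  have hj' : (n - 2 * wt v : ℚ) = 8 * j := by exact_mod_cast hj
  rw [hsq, hj']
  ring

theorem sum_threeTermPoly_eq_zero [DecidablePred (· ∈ C)] (hC : IsSExtremal C)
    (hd : minWt C = 2 * (J + 1)) (hv : v ∈ shadow C) (k : ℕ) (hk : 0 < k)
    (hkJ : k < (shadowNodes J).length) :
    ∑ c : C, threeTermPoly (krawtchoukDiag n) (krawtchoukOffDiag n)
      ((n - 2 * wt (v + c.1)) ^ 2) k = 0 := by
  have hempty : ∀ y : Fin n → ZMod 2, ¬(y ∈ C ∧ wt y = 2 * k) := by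
    rintro y ⟨hy, hyk⟩
    have hy₀ : y ≠ 0 := by
      rintro rfl
      simp only [wt, hammingNorm_zero] at hyk
      omega
    have hle : minWt C ≤ wt y := minWtSet_le_wt hy hy₀
    rw [length_shadowNodes] at hkJ
    omega
  simp [hC.isSelfDual.sum_threeTermPoly_krawtchouk_shadow hv, hempty]

theorem forcedShadowDensity_nonneg (hC : IsSExtremal C) (hd : minWt C = 2 * (J + 1)) {a : ℚ}
    (ha : a ∈ shadowNodes J) : 0 ≤ forcedShadowDensity J n a := by
  classical
  obtain ⟨v, hv⟩ := hC.1.shadow_nonempty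
  have hcount := card_filter_eq_card_mul_nodeWeight (nodup_shadowNodes J)
    (fun c : C => hC.sq_mem_shadowNodes hd (hC.isSelfDual.add_mem_shadow hv c.2))
    (hC.sum_threeTermPoly_eq_zero hd hv) ha
  exact nonneg_of_mul_nonneg_right (hcount ▸ Nat.cast_nonneg _)
    (Nat.cast_pos.2 Fintype.card_pos)

theorem forcedWeightCount_nonneg (hC : IsSExtremal C) (hd : minWt C = 2 * (J + 1)) (k : ℕ) :
    0 ≤ forcedWeightCount J n k := by
  classical
  obtain ⟨v, hv⟩ := hC.1.shadow_nonempty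
  have hsum := sum_eq_card_mul_sum_nodeWeight (nodup_shadowNodes J)
    (fun c : C => hC.sq_mem_shadowNodes hd (hC.isSelfDual.add_mem_shadow hv c.2))
    (hC.sum_threeTermPoly_eq_zero hd hv)
    (threeTermPoly (krawtchoukDiag n) (krawtchoukOffDiag n) · k)
  rw [hC.isSelfDual.sum_threeTermPoly_krawtchouk_shadow hv] at hsum
  have hcard : (Fintype.card C : ℚ) ≠ 0 := Nat.cast_ne_zero.2 Fintype.card_ne_zero
  rw [forcedWeightCount]
  simp only [forcedShadowDensity]
  rw [← mul_left_cancel₀ hcard hsum, mul_left_comm, ← mul_assoc ((-1) ^ k), ← mul_pow]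
  norm_num
  positivity

end IsSExtremal

section Lengths

set_option maxRecDepth 10000

theorem forcedShadowDensity_four_1024_neg :
    ∀ p ∈ Finset.Ico 16 23, forcedShadowDensity 4 (2 * (p : ℕ)) 1024 < 0 := by
  decide +kernel

theorem forcedShadowDensity_six_2304_neg :
    ∀ p ∈ Finset.Ico 24 35, forcedShadowDensity 6 (2 * (p : ℕ)) 2304 < 0 := by
  decide +kernel

-- The index `k` is a numerical choice among those with a negative forced count.
theorem forcedWeightCount_four_neg :
    ∀ p ∈ Finset.Ico 36 63, forcedWeightCount 4 (2 * (p : ℕ)) ((3 * p - 26) / 10) < 0 := by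
  decide +kernel

theorem forcedWeightCount_six_neg :
    ∀ p ∈ Finset.Ico 48 81, forcedWeightCount 6 (2 * (p : ℕ)) ((3 * p - 42) / 10) < 0 := by
  decide +kernel

theorem forcedShadowDensity_four_576_neg {n : ℚ} (hn : 126 ≤ n) :
    forcedShadowDensity 4 n 576 < 0 := by
  have hnodes : (shadowNodes 4).erase 576 = [0, 64, 256, 1024] := by decide +kernel
  obtain ⟨m, hm, rfl⟩ : ∃ m : ℚ, 0 ≤ m ∧ n = 126 + m := ⟨n - 126, by linarith, by ring⟩
  rw [forcedShadowDensity, nodeWeight, hnodes]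
  have hmean : threeTermMean (krawtchoukDiag (126 + m)) (krawtchoukOffDiag (126 + m))
      [0, 64, 256, 1024] 0 =
      130394880 + 112907760 * m + 3295740 * m ^ 2 + 32340 * m ^ 3 + 105 * m ^ 4 := by
    simp only [threeTermMean, krawtchoukDiag, krawtchoukOffDiag]
    push_cast
    ring
  rw [hmean]
  refine div_neg_of_pos_of_neg (by positivity) ?_
  norm_num

theorem forcedShadowDensity_six_1600_neg {n : ℚ} (hn : 162 ≤ n) :
    forcedShadowDensity 6 n 1600 < 0 := by
  have hnodes : (shadowNodes 6).erase 1600 = [0, 64, 256, 576, 1024, 2304] := by decide +kernel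
  obtain ⟨m, hm, rfl⟩ : ∃ m : ℚ, 0 ≤ m ∧ n = 162 + m := ⟨n - 162, by linarith, by ring⟩
  rw [forcedShadowDensity, nodeWeight, hnodes]
  have hmean : threeTermMean (krawtchoukDiag (162 + m)) (krawtchoukOffDiag (162 + m))
      [0, 64, 256, 576, 1024, 2304] 0 =
      378964031846400 + 220902217683840 * m + 9240034668480 * m ^ 2 + 159360755400 * m ^ 3 +
        1383574500 * m ^ 4 + 6008310 * m ^ 5 + 10395 * m ^ 6 := by
    simp only [threeTermMean, krawtchoukDiag, krawtchoukOffDiag]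
    push_cast
    ring
  rw [hmean]
  refine div_neg_of_pos_of_neg (by positivity) ?_
  norm_num

end Lengths

theorem IsSExtremal.length_range_of_minWt_eq_ten (hC : IsSExtremal C) (hd : minWt C = 10) :
    46 ≤ n ∧ n ≤ 70 := by
  have hs := hC.minWtSet_shadow (J := 4) hd
  obtain ⟨p, hp⟩ := hC.isSelfDual.two_dvd_length
  have hp' : (n : ℚ) = 2 * p := by exact_mod_cast hp
  constructor
  · by_contra! hlt
    refine (forcedShadowDensity_four_1024_neg p (Finset.mem_Ico.2 (by omega))).not_ge ?_
    exact hp' ▸ hC.forcedShadowDensity_nonneg hd (by decide +kernel)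
  · by_contra! hgt
    obtain hlt | hge := lt_or_ge n 126
    · refine (forcedWeightCount_four_neg p (Finset.mem_Ico.2 (by omega))).not_ge ?_
      exact hp' ▸ hC.forcedWeightCount_nonneg hd _
    · refine (forcedShadowDensity_four_576_neg (n := n) (by exact_mod_cast hge)).not_ge ?_
      exact hC.forcedShadowDensity_nonneg hd (by decide +kernel)

theorem IsSExtremal.length_range_of_minWt_eq_fourteen (hC : IsSExtremal C) (hd : minWt C = 14) :
    70 ≤ n ∧ n ≤ 94 := by
  have hs := hC.minWtSet_shadow (J := 6) hd
  obtain ⟨p, hp⟩ := hC.isSelfDual.two_dvd_length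
  have hp' : (n : ℚ) = 2 * p := by exact_mod_cast hp
  constructor
  · by_contra! hlt
    refine (forcedShadowDensity_six_2304_neg p (Finset.mem_Ico.2 (by omega))).not_ge ?_
    exact hp' ▸ hC.forcedShadowDensity_nonneg hd (by decide +kernel)
  · by_contra! hgt
    obtain hlt | hge := lt_or_ge n 162
    · refine (forcedWeightCount_six_neg p (Finset.mem_Ico.2 (by omega))).not_ge ?_
      exact hp' ▸ hC.forcedWeightCount_nonneg hd _
    · refine (forcedShadowDensity_six_1600_neg (n := n) (by exact_mod_cast hge)).not_ge ?_
      exact hC.forcedShadowDensity_nonneg hd (by decide +kernel)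

end SExtremal

/-- If there exists an s-extremal singly even self-dual `[n, n/2, 10]` code then
`46 ≤ n ≤ 70`, and if there exists an s-extremal singly even self-dual `[n, n/2, 14]`
code then `70 ≤ n ≤ 94`. -/
theorem sExtremal_length_range_10_14 (n : ℕ) :
    ((∃ C : Submodule (ZMod 2) (Fin n → ZMod 2),
        IsSExtremal C ∧ Module.finrank (ZMod 2) C = n / 2 ∧ minWt C = 10) →
      46 ≤ n ∧ n ≤ 70) ∧
    ((∃ C : Submodule (ZMod 2) (Fin n → ZMod 2),
        IsSExtremal C ∧ Module.finrank (ZMod 2) C = n / 2 ∧ minWt C = 14) →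
      70 ≤ n ∧ n ≤ 94) :=
  ⟨fun ⟨_, hC, _, hd⟩ => hC.length_range_of_minWt_eq_ten hd,
    fun ⟨_, hC, _, hd⟩ => hC.length_range_of_minWt_eq_fourteen hd⟩
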